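/- arXiv:1402.5128 — 6 statements merged into one kernel-verified Lean document; each statement's English description precedes it below -/
import Mathlib

section
/- Let C be a nonempty bounded, closed and convex subset of a real Hilbert space H and let F : C × C → C be a weakly nonexpansive operator. Then F has at least one coupled fixed point in C of the form (x̄, x̄); that is, there exists x̄ ∈ C with F(x̄, x̄) = x̄. -/
open Filter Topology in
theorem browder_aux
    {H : Type*} [NormedAddCommGroup H] [InnerProductSpace ℝ H] [CompleteSpace H]
    (C : Set H) (hne : C.Nonempty) (hbdd : Bornology.IsBounded C)
    (hcl : IsClosed C) (hconv : Convex ℝ C)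
    (T : H → H) (hmaps : ∀ x ∈ C, T x ∈ C)
    (hT : ∀ x ∈ C, ∀ y ∈ C, ‖T x - T y‖ ≤ ‖x - y‖) :
    ∃ x ∈ C, T x = x := by
  obtain ⟨u, hu⟩ := hne
  have key : ∀ p : ℝ, 0 < p → ∃ x ∈ C, T x - u = (1 + p) • (x - u) := by
    intro p hp
    have h1 : 0 < 1 + p := by linarith
    have ht0 : 0 ≤ (1 + p)⁻¹ := by positivity
    have ht1 : (1 + p)⁻¹ < 1 := inv_lt_one_of_one_lt₀ (by linarith)
    let g : C → C := fun x => ⟨u + (1 + p)⁻¹ • (T x - u),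
      hconv.add_smul_sub_mem hu (hmaps x x.2) ⟨ht0, ht1.le⟩⟩
    have hg : ContractingWith ⟨(1 + p)⁻¹, ht0⟩ g := by
      refine ⟨by exact_mod_cast ht1, LipschitzWith.of_dist_le_mul fun x y => ?_⟩
      have e : (u + (1 + p)⁻¹ • (T x - u)) - (u + (1 + p)⁻¹ • (T y - u))
        = (1 + p)⁻¹ • (T x - T y) := by module
      change dist (u + (1 + p)⁻¹ • (T x - u)) (u + (1 + p)⁻¹ • (T y - u))
        ≤ (1 + p)⁻¹ * dist (x : H) y
      rw [dist_eq_norm, e, norm_smul, Real.norm_of_nonneg ht0, dist_eq_norm]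
      exact mul_le_mul_of_nonneg_left (hT x x.2 y y.2) ht0
    haveI : Nonempty C := ⟨⟨u, hu⟩⟩
    haveI : CompleteSpace C := hcl.completeSpace_coe
    have hfix := hg.fixedPoint_isFixedPt
    set x := ContractingWith.fixedPoint g hg
    have h2 : u + (1 + p)⁻¹ • (T x - u) = (x : H) := congrArg Subtype.val hfix
    refine ⟨x, x.2, ?_⟩
    rw [← h2]
    simp only [add_sub_cancel_left]
    rw [h2, smul_smul, mul_inv_cancel₀ h1.ne', one_smul]
  have hp : ∀ n : ℕ, (0 : ℝ) < 1 / ((n : ℝ) + 1) := fun n => by positivity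
  choose x hxC hx using fun n : ℕ => key _ (hp n)
  have main : ∀ m n, m < n → ‖x n - x m‖ ^ 2 ≤ ‖x n - u‖ ^ 2 - ‖x m - u‖ ^ 2 := by
    intro m n hmn
    have hpq : 1 / ((n : ℝ) + 1) < 1 / ((m : ℝ) + 1) := by
      apply one_div_lt_one_div_of_lt (by positivity)
      have : (m : ℝ) < n := by exact_mod_cast hmn
      linarith
    have h0 := hp n
    have hm := hx m
    have hn := hx n
    generalize 1 / ((n : ℝ) + 1) = q at *
    generalize 1 / ((m : ℝ) + 1) = p at *
    have hne := hT _ (hxC n) _ (hxC m)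
    have e1 : T (x n) - T (x m) = (1 + q) • (x n - u) - (1 + p) • (x m - u) := by
      rw [← hn, ← hm]; abel
    have e2 : x n - x m = (x n - u) - (x m - u) := by abel
    rw [e1, e2] at hne
    rw [e2]
    generalize x n - u = y at *
    generalize x m - u = w at *
    have e3 : (1 + q) • y - (1 + p) • w = (y - w) + (q • y - p • w) := by module
    have hsq := pow_le_pow_left₀ (norm_nonneg _) hne 2
    rw [e3, norm_add_sq_real] at hsq
    have hin : inner ℝ (y - w) (q • y - p • w) ≤ 0 := by
      nlinarith [sq_nonneg ‖q • y - p • w‖]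
    simp only [inner_sub_left, inner_sub_right, inner_smul_right,
      real_inner_self_eq_norm_sq] at hin
    rw [real_inner_comm y w] at hin
    have hyw := norm_sub_sq_real y w
    have hA : (p + q) * ‖y - w‖ ^ 2 ≤ (p - q) * (‖y‖ ^ 2 - ‖w‖ ^ 2) := by
      rw [hyw]; nlinarith
    have hB : 0 ≤ ‖y‖ ^ 2 - ‖w‖ ^ 2 := by
      by_contra hneg
      push Not at hneg
      have : 0 ≤ (p + q) * ‖y - w‖ ^ 2 := mul_nonneg (by linarith) (sq_nonneg _)
      nlinarith
    have hC : (p + q) * ‖y - w‖ ^ 2 ≤ (p + q) * (‖y‖ ^ 2 - ‖w‖ ^ 2) := by nlinarith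
    exact le_of_mul_le_mul_left hC (by linarith)
  obtain ⟨R, hR⟩ := hbdd.exists_norm_le
  have hbd : ∀ n, ‖x n - u‖ ≤ 2 * R := fun n => by
    have := norm_sub_le (x n) u
    linarith [hR _ (hxC n), hR _ hu]
  have hmono : Monotone fun n => ‖x n - u‖ ^ 2 := by
    apply monotone_nat_of_le_succ
    intro n
    have := main n (n + 1) (Nat.lt_succ_self n)
    linarith [sq_nonneg ‖x (n + 1) - x n‖]
  have hba : BddAbove (Set.range fun n => ‖x n - u‖ ^ 2) := by
    refine ⟨(2 * R) ^ 2, ?_⟩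
    rintro _ ⟨n, rfl⟩
    exact pow_le_pow_left₀ (norm_nonneg _) (hbd n) 2
  have hcs := (tendsto_atTop_ciSup hmono hba).cauchySeq
  have hc : CauchySeq x := by
    rw [Metric.cauchySeq_iff'] at hcs ⊢
    intro ε hε
    obtain ⟨N, hN⟩ := hcs (ε ^ 2) (by positivity)
    refine ⟨N, fun n hn => ?_⟩
    rcases eq_or_lt_of_le hn with h | h
    · subst h; simpa using hε
    · have h1 := hN n hn
      rw [Real.dist_eq] at h1
      rw [dist_eq_norm]
      exact lt_of_pow_lt_pow_left₀ 2 hε.le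
        (lt_of_le_of_lt (main N n h) (lt_of_le_of_lt (le_abs_self _) h1))
  obtain ⟨z, hz⟩ := cauchySeq_tendsto_of_complete hc
  have hzC : z ∈ C := hcl.mem_of_tendsto hz (Eventually.of_forall hxC)
  refine ⟨z, hzC, ?_⟩
  have t1 : Tendsto (fun n => T (x n)) atTop (𝓝 (T z)) := by
    rw [tendsto_iff_norm_sub_tendsto_zero] at hz ⊢
    exact squeeze_zero (fun _ => norm_nonneg _) (fun n => hT _ (hxC n) _ hzC) hz
  have t2 : Tendsto (fun n => T (x n)) atTop (𝓝 z) := by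
    have e : (fun n => T (x n)) =
        fun n : ℕ => u + (1 + 1 / ((n : ℝ) + 1)) • (x n - u) := by
      funext n; rw [← hx n]; abel
    rw [e]
    have h3 : Tendsto (fun n : ℕ => 1 + 1 / ((n : ℝ) + 1)) atTop (𝓝 (1 + 0)) :=
      tendsto_const_nhds.add tendsto_one_div_add_atTop_nhds_zero_nat
    have h4 := (h3.smul (hz.sub_const u)).const_add u
    simpa using h4
  exact tendsto_nhds_unique t1 t2

/-- A weakly nonexpansive self-map `F : C × C → C` of a nonempty bounded
closed convex subset of a real Hilbert space has a coupled fixed point of the form `(x̄, x̄)`. -/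
theorem exists_diagonal_coupled_fixed_point
    {H : Type*} [NormedAddCommGroup H] [InnerProductSpace ℝ H] [CompleteSpace H]
    (C : Set H) (hne : C.Nonempty) (hbdd : Bornology.IsBounded C)
    (hcl : IsClosed C) (hconv : Convex ℝ C)
    (F : H → H → H) (hmaps : ∀ x ∈ C, ∀ y ∈ C, F x y ∈ C)
    (a b : ℝ) (ha : 0 ≤ a) (hb : 0 ≤ b) (hab : a + b ≤ 1)
    (hF : ∀ x ∈ C, ∀ y ∈ C, ∀ u ∈ C, ∀ v ∈ C,
      ‖F x y - F u v‖ ≤ a * ‖x - u‖ + b * ‖y - v‖) :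
    ∃ x ∈ C, F x x = x := by
  refine browder_aux C hne hbdd hcl hconv (fun x => F x x) (fun x hx => hmaps x hx x hx) ?_
  intro x hx y hy
  have h := hF x hx x hx y hy y hy
  have h2 : (a + b) * ‖x - y‖ ≤ 1 * ‖x - y‖ := mul_le_mul_of_nonneg_right hab (norm_nonneg _)
  change ‖F x x - F y y‖ ≤ ‖x - y‖
  linarith
end

section
/- Let C be a nonempty bounded, closed and convex subset of a real Hilbert space H, let F : C × C → C be weakly nonexpansive, let λ ∈ (0,1), and let the sequence (xₙ) in C be given by x₀ ∈ C and xₙ₊₁ = λxₙ + (1−λ)F(xₙ, xₙ). Then xₙ − F(xₙ, xₙ) → 0 strongly as n → ∞. -/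
open Filter Topology

lemma km_approx {H : Type*} [NormedAddCommGroup H] [InnerProductSpace ℝ H]
    (C : Set H) (hconv : Convex ℝ C) (T : H → H) (hm : ∀ x ∈ C, T x ∈ C)
    (hT : ∀ x ∈ C, ∀ y ∈ C, ‖T x - T y‖ ≤ ‖x - y‖) (p : H) (hp : p ∈ C)
    (D : ℝ) (hD : 0 < D) (hd : ∀ x ∈ C, ∀ y ∈ C, ‖x - y‖ ≤ D) (e : ℝ) (he : 0 < e) :
    ∃ z ∈ C, ‖z - T z‖ ≤ e := by
  obtain ⟨t, ht0, ht1, hte⟩ : ∃ t : ℝ, 0 < t ∧ t < 1 ∧ t * D ≤ e / 2 := by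
    refine ⟨min (1/2) (e / 2 / D), by positivity, by
      exact lt_of_le_of_lt (min_le_left _ _) (by norm_num), ?_⟩
    calc min (1/2) (e / 2 / D) * D ≤ (e / 2 / D) * D := by gcongr; exact min_le_right _ _
      _ = e / 2 := by field_simp
  let S : H → H := fun y => (1 - t) • T y + t • p
  have hS : ∀ y ∈ C, S y ∈ C := fun y hy =>
    hconv (hm y hy) hp (by linarith) ht0.le (by ring)
  have hy : ∀ k, S^[k] p ∈ C := by
    intro k
    induction k with
    | zero => exact hp
    | succ k ih => rw [Function.iterate_succ_apply']; exact hS _ ih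
  have hk : ∀ k, ‖S^[k] p - S (S^[k] p)‖ ≤ (1 - t) ^ k * D := by
    intro k
    induction k with
    | zero => simpa using hd p hp _ (hS p hp)
    | succ k ih =>
      rw [Function.iterate_succ_apply']
      have h1 : S (S^[k] p) - S (S (S^[k] p))
          = (1 - t) • (T (S^[k] p) - T (S (S^[k] p))) := by
        change ((1 - t) • T (S^[k] p) + t • p) - ((1 - t) • T (S (S^[k] p)) + t • p) = _
        rw [smul_sub]; abel
      rw [h1, norm_smul, Real.norm_of_nonneg (by linarith), pow_succ']
      have h2 := hT _ (hy k) _ (hS _ (hy k))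
      rw [mul_assoc]
      exact mul_le_mul_of_nonneg_left (h2.trans ih) (by linarith)
  obtain ⟨k, hk2⟩ := exists_pow_lt_of_lt_one (show 0 < e / 2 / D by positivity)
    (show 1 - t < 1 by linarith)
  refine ⟨S^[k] p, hy k, ?_⟩
  have h3 : S^[k] p - T (S^[k] p) = (S^[k] p - S (S^[k] p)) + t • (p - T (S^[k] p)) := by
    change _ = (_ - ((1 - t) • T (S^[k] p) + t • p)) + _
    module
  rw [h3]
  refine (norm_add_le _ _).trans ?_
  rw [norm_smul, Real.norm_of_nonneg ht0.le]
  have h4 := mul_le_mul_of_nonneg_left (hd p hp _ (hm _ (hy k))) ht0.le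
  have h5 : (1 - t) ^ k * D ≤ e / 2 := by
    rw [lt_div_iff₀ hD] at hk2; exact hk2.le
  linarith [hk k]

lemma km_id {H : Type*} [NormedAddCommGroup H] [InnerProductSpace ℝ H] (u v : H) (l : ℝ) :
    ‖l • u + (1 - l) • v‖ ^ 2 = l * ‖u‖ ^ 2 + (1 - l) * ‖v‖ ^ 2 - l * (1 - l) * ‖u - v‖ ^ 2 := by
  rw [norm_add_sq_real, norm_sub_sq_real, norm_smul, norm_smul, inner_smul_left,
    inner_smul_right, mul_pow, mul_pow, Real.norm_eq_abs, Real.norm_eq_abs, sq_abs, sq_abs]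
  simp only [conj_trivial]
  ring

/-- For a weakly nonexpansive `F : C × C → C` on a nonempty bounded
closed convex subset of a real Hilbert space, `λ ∈ (0,1)` and the Krasnoselskij
iteration `xₙ₊₁ = λxₙ + (1−λ)F(xₙ,xₙ)` starting in `C`, one has
`xₙ − F(xₙ,xₙ) → 0` strongly. -/
theorem krasnoselskij_asymptotic_regularity
    {H : Type*} [NormedAddCommGroup H] [InnerProductSpace ℝ H] [CompleteSpace H]
    (C : Set H) (hne : C.Nonempty) (hbdd : Bornology.IsBounded C)
    (hcl : IsClosed C) (hconv : Convex ℝ C)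
    (F : H → H → H) (hmaps : ∀ x ∈ C, ∀ y ∈ C, F x y ∈ C)
    (a b : ℝ) (ha : 0 ≤ a) (hb : 0 ≤ b) (hab : a + b ≤ 1)
    (hF : ∀ x ∈ C, ∀ y ∈ C, ∀ u ∈ C, ∀ v ∈ C,
      ‖F x y - F u v‖ ≤ a * ‖x - u‖ + b * ‖y - v‖)
    (l : ℝ) (hl0 : 0 < l) (hl1 : l < 1)
    (x : ℕ → H) (hx0 : x 0 ∈ C)
    (hrec : ∀ n, x (n + 1) = l • x n + (1 - l) • F (x n) (x n)) :
    Tendsto (fun n => x n - F (x n) (x n)) atTop (𝓝 0) := by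
  obtain ⟨D0, hD0⟩ := Metric.isBounded_iff.1 hbdd
  obtain ⟨D, hD, hd⟩ : ∃ D : ℝ, 0 < D ∧ ∀ x ∈ C, ∀ y ∈ C, ‖x - y‖ ≤ D := by
    refine ⟨max D0 1, by positivity, fun x hx y hy => ?_⟩
    rw [← dist_eq_norm]
    exact (hD0 hx hy).trans (le_max_left _ _)
  let T : H → H := fun y => F y y
  have hm : ∀ y ∈ C, T y ∈ C := fun y hy => hmaps y hy y hy
  have hT : ∀ y ∈ C, ∀ z ∈ C, ‖T y - T z‖ ≤ ‖y - z‖ := by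
    intro y hy z hz
    have h1 := hF y hy y hy z hz z hz
    have h2 := mul_le_mul_of_nonneg_right hab (norm_nonneg (y - z))
    change ‖F y y - F z z‖ ≤ _
    linarith
  have hrec' : ∀ n, x (n + 1) = l • x n + (1 - l) • T (x n) := hrec
  have hx : ∀ n, x n ∈ C := by
    intro n
    induction n with
    | zero => exact hx0
    | succ k ih =>
      rw [hrec']
      exact hconv ih (hm _ ih) hl0.le (by linarith) (by ring)
  have hr : ∀ n, ‖x (n + 1) - T (x (n + 1))‖ ≤ ‖x n - T (x n)‖ := by
    intro n
    have h1 : x (n + 1) - T (x (n + 1)) =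
        l • (x n - T (x n)) + (T (x n) - T (x (n + 1))) := by
      nth_rewrite 1 [hrec' n]
      module
    have h2 : x n - x (n + 1) = (1 - l) • (x n - T (x n)) := by
      rw [hrec' n]; module
    have h3 := hT _ (hx n) _ (hx (n + 1))
    rw [h2, norm_smul, Real.norm_of_nonneg (by linarith)] at h3
    rw [h1]
    refine (norm_add_le _ _).trans ?_
    rw [norm_smul, Real.norm_of_nonneg hl0.le]
    linarith
  have hl : 0 < l * (1 - l) := mul_pos hl0 (by linarith)
  have key : ∀ e : ℝ, 0 < e → ∀ n : ℕ,
      l * (1 - l) * n * ‖x n - T (x n)‖ ^ 2 ≤ D ^ 2 + n * (2 * D * e + e ^ 2) := by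
    intro e he
    obtain ⟨z, hz, hze⟩ := km_approx C hconv T hm hT (x 0) hx0 D hD hd e he
    have : ∀ n : ℕ, ‖x n - z‖ ^ 2 + l * (1 - l) * n * ‖x n - T (x n)‖ ^ 2
        ≤ D ^ 2 + n * (2 * D * e + e ^ 2) := by
      intro n
      induction n with
      | zero =>
        have := pow_le_pow_left₀ (norm_nonneg _) (hd _ (hx 0) _ hz) 2
        simpa using this
      | succ n ih =>
        have h1 : x (n + 1) - z = l • (x n - z) + (1 - l) • (T (x n) - z) := by
          rw [hrec' n]; module
        have h2 := km_id (x n - z) (T (x n) - z) l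
        rw [← h1, sub_sub_sub_cancel_right] at h2
        have h3 : ‖T (x n) - z‖ ≤ ‖x n - z‖ + e := by
          have : T (x n) - z = (T (x n) - T z) - (z - T z) := by abel
          rw [this]
          exact (norm_sub_le _ _).trans (add_le_add (hT _ (hx n) _ hz) hze)
        have h4 : ‖T (x n) - z‖ ^ 2 ≤ ‖x n - z‖ ^ 2 + (2 * D * e + e ^ 2) := by
          have h5 := pow_le_pow_left₀ (norm_nonneg _) h3 2
          have h6 := mul_le_mul_of_nonneg_right (hd _ (hx n) _ hz) he.le
          nlinarith
        have h7 := mul_le_mul_of_nonneg_left h4 (show 0 ≤ 1 - l by linarith)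
        have h8 := mul_le_mul_of_nonneg_left
          (pow_le_pow_left₀ (norm_nonneg _) (hr n) 2)
          (show 0 ≤ l * (1 - l) * ((n : ℝ) + 1) by positivity)
        have h9 : 0 ≤ l * (2 * D * e + e ^ 2) := by positivity
        push_cast
        linarith
    intro n
    linarith [this n, sq_nonneg ‖x n - z‖]
  have key2 : ∀ n : ℕ, l * (1 - l) * n * ‖x n - T (x n)‖ ^ 2 ≤ D ^ 2 := by
    intro n
    have ht : Tendsto (fun e : ℝ => D ^ 2 + n * (2 * D * e + e ^ 2)) (𝓝[>] 0) (𝓝 (D ^ 2)) := by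
      have hc : Continuous (fun e : ℝ => D ^ 2 + n * (2 * D * e + e ^ 2)) := by fun_prop
      have := hc.tendsto 0
      simp only [mul_zero, ne_eq, OfNat.ofNat_ne_zero, not_false_eq_true, zero_pow,
        add_zero] at this
      exact this.mono_left nhdsWithin_le_nhds
    exact ge_of_tendsto ht (eventually_nhdsWithin_of_forall fun e he => key e he n)
  have hsq : Tendsto (fun n => ‖x n - T (x n)‖ ^ 2) atTop (𝓝 0) := by
    refine tendsto_of_tendsto_of_tendsto_of_le_of_le' tendsto_const_nhds
      (tendsto_const_div_atTop_nhds_zero_nat (D ^ 2 / (l * (1 - l))))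
      (Eventually.of_forall fun n => sq_nonneg _) ?_
    filter_upwards [eventually_gt_atTop 0] with n hn
    have hn' : (0 : ℝ) < n := by exact_mod_cast hn
    rw [div_div, le_div_iff₀ (by positivity)]
    linarith [key2 n]
  rw [tendsto_zero_iff_norm_tendsto_zero]
  have := hsq.sqrt
  simpa [Real.sqrt_sq, T] using this
end

section
/- Let C be a nonempty bounded, closed and convex subset of a real Hilbert space H and let F : C × C → C be a weakly nonexpansive and demicompact operator. Then the set of coupled fixed points of F is nonempty, and for every λ ∈ (0,1) and every x₀ ∈ C, the sequence defined by xₙ₊₁ = λxₙ + (1−λ)F(xₙ, xₙ) converges strongly to some q ∈ C with F(q,q) = q. -/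
open Filter Topology

lemma approx_fix_aux {H : Type*} [NormedAddCommGroup H] [InnerProductSpace ℝ H] [CompleteSpace H]
    (C : Set H) (hcl : IsClosed C) (hconv : Convex ℝ C)
    (T : H → H) (hmaps : ∀ x ∈ C, T x ∈ C)
    (hT : ∀ x ∈ C, ∀ y ∈ C, ‖T x - T y‖ ≤ ‖x - y‖) (p : H) (hp : p ∈ C)
    (t : ℝ) (ht : 0 < t) (ht1 : t ≤ 1) :
    ∃ z ∈ C, z = t • p + (1 - t) • T z := by
  have hm : Set.MapsTo (fun z => t • p + (1 - t) • T z) C C := fun z hz =>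
    hconv hp (hmaps z hz) ht.le (by linarith) (by ring)
  have hK : ContractingWith (Real.toNNReal (1 - t)) (hm.restrict _ C C) := by
    constructor
    · rw [← NNReal.coe_lt_coe, Real.coe_toNNReal _ (by linarith)]
      simpa using ht
    · apply LipschitzWith.of_dist_le_mul
      rintro ⟨x, hx⟩ ⟨y, hy⟩
      rw [Real.coe_toNNReal _ (by linarith)]
      simp only [Subtype.dist_eq, Set.MapsTo.val_restrict_apply, dist_eq_norm]
      have : t • p + (1 - t) • T x - (t • p + (1 - t) • T y) = (1 - t) • (T x - T y) := by
        module
      rw [this, norm_smul, Real.norm_of_nonneg (by linarith)]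
      exact mul_le_mul_of_nonneg_left (hT x hx y hy) (by linarith)
  obtain ⟨z, hz, hfix, -⟩ := hK.exists_fixedPoint' hcl.isComplete hm hp (edist_ne_top _ _)
  exact ⟨z, hz, hfix.symm⟩

lemma limit_fix_aux {H : Type*} [NormedAddCommGroup H]
    (C : Set H) (T : H → H)
    (hT : ∀ x ∈ C, ∀ y ∈ C, ‖T x - T y‖ ≤ ‖x - y‖) (u : ℕ → H) (hu : ∀ n, u n ∈ C)
    (q : H) (hq : q ∈ C) (h : Tendsto u atTop (𝓝 q))
    (h0 : Tendsto (fun n => T (u n) - u n) atTop (𝓝 0)) : T q = q := by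
  have h1 : Tendsto (fun n => u n - q) atTop (𝓝 0) := by
    simpa using h.sub_const q
  have h2 : Tendsto (fun n => T (u n) - T q) atTop (𝓝 0) :=
    squeeze_zero_norm (fun n => hT _ (hu n) _ hq) (by simpa using h1.norm)
  have h3 : Tendsto (fun _ : ℕ => T q - q) atTop (𝓝 0) := by
    have := (h0.add h1).sub h2
    simp only [add_zero, sub_zero] at this
    refine this.congr fun n => ?_
    abel
  exact sub_eq_zero.1 (tendsto_const_nhds_iff.1 h3)

lemma mann_aux {H : Type*} [NormedAddCommGroup H] [InnerProductSpace ℝ H] (x y : H) (l : ℝ) :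
    ‖l • x + (1 - l) • y‖ ^ 2 = l * ‖x‖ ^ 2 + (1 - l) * ‖y‖ ^ 2 - l * (1 - l) * ‖y - x‖ ^ 2 := by
  rw [norm_add_sq_real, norm_sub_sq_real, norm_smul, norm_smul, inner_smul_left, inner_smul_right,
    mul_pow, mul_pow, Real.norm_eq_abs, Real.norm_eq_abs, sq_abs, sq_abs, real_inner_comm]
  simp
  ring



/-- If `F : C × C → C` is weakly nonexpansive and demicompact on a
nonempty bounded closed convex subset `C` of a real Hilbert space, then the set of
coupled fixed points of `F` is nonempty and, for every `λ ∈ (0,1)` and `x₀ ∈ C`, the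
Krasnoselskij iteration `xₙ₊₁ = λxₙ + (1−λ)F(xₙ,xₙ)` converges strongly to some
`q ∈ C` with `F(q,q) = q`. -/
theorem krasnoselskij_strong_convergence_demicompact
    {H : Type*} [NormedAddCommGroup H] [InnerProductSpace ℝ H] [CompleteSpace H]
    (C : Set H) (hne : C.Nonempty) (hbdd : Bornology.IsBounded C)
    (hcl : IsClosed C) (hconv : Convex ℝ C)
    (F : H → H → H) (hmaps : ∀ x ∈ C, ∀ y ∈ C, F x y ∈ C)
    (a b : ℝ) (ha : 0 ≤ a) (hb : 0 ≤ b) (hab : a + b ≤ 1)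
    (hF : ∀ x ∈ C, ∀ y ∈ C, ∀ u ∈ C, ∀ v ∈ C,
      ‖F x y - F u v‖ ≤ a * ‖x - u‖ + b * ‖y - v‖)
    (hdemi : ∀ u v : ℕ → H, (∀ n, u n ∈ C) → (∀ n, v n ∈ C) →
      Bornology.IsBounded (Set.range u) → Bornology.IsBounded (Set.range v) →
      (∃ su : H, Tendsto (fun n => F (u n) (v n) - u n) atTop (𝓝 su)) →
      (∃ sv : H, Tendsto (fun n => F (v n) (u n) - v n) atTop (𝓝 sv)) →
      ∃ φ : ℕ → ℕ, StrictMono φ ∧ ∃ u₀ v₀ : H,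
        Tendsto (u ∘ φ) atTop (𝓝 u₀) ∧ Tendsto (v ∘ φ) atTop (𝓝 v₀)) :
    (∃ x ∈ C, ∃ y ∈ C, F x y = x ∧ F y x = y) ∧
      ∀ l : ℝ, 0 < l → l < 1 → ∀ x : ℕ → H, x 0 ∈ C →
        (∀ n, x (n + 1) = l • x n + (1 - l) • F (x n) (x n)) →
        ∃ q ∈ C, F q q = q ∧ Tendsto x atTop (𝓝 q) := by

  have hT : ∀ x ∈ C, ∀ y ∈ C, ‖F x x - F y y‖ ≤ ‖x - y‖ := by
    intro x hx y hy
    have := hF x hx x hx y hy y hy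
    nlinarith [norm_nonneg (x - y)]
  have key : ∀ u : ℕ → H, (∀ n, u n ∈ C) →
      Tendsto (fun n => F (u n) (u n) - u n) atTop (𝓝 0) →
      ∃ q ∈ C, F q q = q ∧ ∃ φ : ℕ → ℕ, StrictMono φ ∧ Tendsto (u ∘ φ) atTop (𝓝 q) := by
    intro u hu h0
    have hb' : Bornology.IsBounded (Set.range u) :=
      hbdd.subset (Set.range_subset_iff.2 hu)
    obtain ⟨φ, hφ, q, -, hq, -⟩ := hdemi u u hu hu hb' hb' ⟨0, h0⟩ ⟨0, h0⟩
    have hqC : q ∈ C := hcl.mem_of_tendsto hq (Eventually.of_forall fun n => hu _)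
    exact ⟨q, hqC, limit_fix_aux C (fun x => F x x) hT (u ∘ φ) (fun n => hu _) q hqC hq
      (h0.comp hφ.tendsto_atTop), φ, hφ, hq⟩
  have hfix : ∃ p ∈ C, F p p = p := by
    obtain ⟨p, hp⟩ := hne
    have ht : ∀ n : ℕ, ∃ z ∈ C, z = (1 / ((n : ℝ) + 1)) • p + (1 - 1 / ((n : ℝ) + 1)) • F z z := by
      intro n
      refine approx_fix_aux C hcl hconv (fun x => F x x) (fun x hx => hmaps x hx x hx) hT p hp _
        (by positivity) ?_
      rw [div_le_one (by positivity)]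
      linarith [(Nat.cast_nonneg n : (0 : ℝ) ≤ n)]
    choose z hzC hz using ht
    obtain ⟨D, hD⟩ := Metric.isBounded_iff.1 hbdd
    have h0 : Tendsto (fun n => F (z n) (z n) - z n) atTop (𝓝 0) := by
      refine squeeze_zero_norm (a := fun n : ℕ => (1 / ((n : ℝ) + 1)) * D) (fun n => ?_) ?_
      · have e : F (z n) (z n) - z n = (1 / ((n : ℝ) + 1)) • (F (z n) (z n) - p) := by
          calc F (z n) (z n) - z n = F (z n) (z n) - ((1 / ((n : ℝ) + 1)) • p
                + (1 - 1 / ((n : ℝ) + 1)) • F (z n) (z n)) := by rw [← hz n]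
            _ = _ := by module
        rw [e, norm_smul, Real.norm_of_nonneg (by positivity), ← dist_eq_norm]
        exact mul_le_mul_of_nonneg_left (hD (hmaps _ (hzC n) _ (hzC n)) hp) (by positivity)
      · simpa using (tendsto_one_div_add_atTop_nhds_zero_nat (𝕜 := ℝ)).mul_const D
    obtain ⟨q, hq, hq', -⟩ := key z hzC h0
    exact ⟨q, hq, hq'⟩
  refine ⟨?_, ?_⟩
  · obtain ⟨p, hp, h⟩ := hfix
    exact ⟨p, hp, p, hp, h, h⟩
  intro l hl hl1 x hx0 hx
  have hxC : ∀ n, x n ∈ C := by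
    intro n
    induction n with
    | zero => exact hx0
    | succ n ih =>
      rw [hx]
      exact hconv ih (hmaps _ ih _ ih) hl.le (by linarith) (by ring)
  have hstep : ∀ p ∈ C, F p p = p → ∀ n,
      ‖x (n + 1) - p‖ ^ 2 ≤ ‖x n - p‖ ^ 2 - l * (1 - l) * ‖F (x n) (x n) - x n‖ ^ 2 := by
    intro p hp hpp n
    have e : x (n + 1) - p = l • (x n - p) + (1 - l) • (F (x n) (x n) - p) := by
      rw [hx]; module
    have h1 := hT _ (hxC n) p hp
    rw [hpp] at h1
    have h2 : ‖F (x n) (x n) - p‖ ^ 2 ≤ ‖x n - p‖ ^ 2 := by gcongr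
    rw [e, mann_aux, sub_sub_sub_cancel_right]
    nlinarith
  have hl2 : 0 < l * (1 - l) := mul_pos hl (by linarith)
  have hanti : ∀ p ∈ C, F p p = p → Antitone (fun n => ‖x n - p‖ ^ 2) := by
    intro p hp hpp
    refine antitone_nat_of_succ_le fun n => ?_
    have := hstep p hp hpp n
    nlinarith [mul_nonneg hl2.le (sq_nonneg ‖F (x n) (x n) - x n‖)]
  have hlim : ∀ p ∈ C, F p p = p → ∃ L, Tendsto (fun n => ‖x n - p‖ ^ 2) atTop (𝓝 L) := by
    intro p hp hpp
    exact ⟨_, tendsto_atTop_ciInf (hanti p hp hpp)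
      ⟨0, by rintro _ ⟨n, rfl⟩; positivity⟩⟩
  have h0 : Tendsto (fun n => F (x n) (x n) - x n) atTop (𝓝 0) := by
    obtain ⟨p, hp, hpp⟩ := hfix
    obtain ⟨L, hL⟩ := hlim p hp hpp
    have hd := (hL.sub (hL.comp (tendsto_add_atTop_nat 1))).div_const (l * (1 - l))
    simp only [sub_self, zero_div] at hd
    have hsq : Tendsto (fun n => ‖F (x n) (x n) - x n‖ ^ 2) atTop (𝓝 0) := by
      refine squeeze_zero (fun n => by positivity) (fun n => ?_) hd
      rw [le_div_iff₀ hl2]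
      have := hstep p hp hpp n
      simp only [Function.comp]
      linarith
    rw [tendsto_zero_iff_norm_tendsto_zero]
    simpa [Real.sqrt_sq] using hsq.sqrt
  obtain ⟨q, hq, hqq, φ, hφ, hφq⟩ := key x hxC h0
  refine ⟨q, hq, hqq, ?_⟩
  obtain ⟨L, hL⟩ := hlim q hq hqq
  have h1 : Tendsto (fun n => ‖x (φ n) - q‖ ^ 2) atTop (𝓝 0) := by
    simpa using ((hφq.sub_const q).norm.pow 2)
  have hL0 : L = 0 := tendsto_nhds_unique (hL.comp hφ.tendsto_atTop) h1
  rw [hL0] at hL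
  rw [tendsto_iff_norm_sub_tendsto_zero]
  simpa [Real.sqrt_sq] using hL.sqrt
end

section
/- Let C be a nonempty bounded, closed and convex subset of a real Hilbert space H and let F : C × C → C satisfy ‖F(x,y) − F(u,v)‖ ≤ (1/2)(‖x − u‖ + ‖y − v‖) for all x, y, u, v ∈ C, and suppose F is demicompact. Then for every λ ∈ (0,1) and every x₀ ∈ C, the sequence defined by xₙ₊₁ = λxₙ + (1−λ)F(xₙ, xₙ) converges strongly to some q ∈ C with F(q,q) = q. -/
open Filter Topology

/-- If `F : C × C → C` is nonexpansive in the sense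
`‖F(x,y) − F(u,v)‖ ≤ ½(‖x−u‖ + ‖y−v‖)` and demicompact on a nonempty bounded closed
convex subset `C` of a real Hilbert space, then for every `λ ∈ (0,1)` and `x₀ ∈ C`,
the Krasnoselskij iteration `xₙ₊₁ = λxₙ + (1−λ)F(xₙ,xₙ)` converges strongly to some
`q ∈ C` with `F(q,q) = q`. -/
theorem krasnoselskij_strong_convergence_nonexpansive_demicompact
    {H : Type*} [NormedAddCommGroup H] [InnerProductSpace ℝ H] [CompleteSpace H]
    (C : Set H) (hne : C.Nonempty) (hbdd : Bornology.IsBounded C)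
    (hcl : IsClosed C) (hconv : Convex ℝ C)
    (F : H → H → H) (hmaps : ∀ x ∈ C, ∀ y ∈ C, F x y ∈ C)
    (hF : ∀ x ∈ C, ∀ y ∈ C, ∀ u ∈ C, ∀ v ∈ C,
      ‖F x y - F u v‖ ≤ (1 / 2) * (‖x - u‖ + ‖y - v‖))
    (hdemi : ∀ u v : ℕ → H, (∀ n, u n ∈ C) → (∀ n, v n ∈ C) →
      Bornology.IsBounded (Set.range u) → Bornology.IsBounded (Set.range v) →
      (∃ su : H, Tendsto (fun n => F (u n) (v n) - u n) atTop (𝓝 su)) →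
      (∃ sv : H, Tendsto (fun n => F (v n) (u n) - v n) atTop (𝓝 sv)) →
      ∃ φ : ℕ → ℕ, StrictMono φ ∧ ∃ u₀ v₀ : H,
        Tendsto (u ∘ φ) atTop (𝓝 u₀) ∧ Tendsto (v ∘ φ) atTop (𝓝 v₀)) :
    ∀ l : ℝ, 0 < l → l < 1 → ∀ x : ℕ → H, x 0 ∈ C →
      (∀ n, x (n + 1) = l • x n + (1 - l) • F (x n) (x n)) →
      ∃ q ∈ C, F q q = q ∧ Tendsto x atTop (𝓝 q) := by
  have hT : ∀ x ∈ C, ∀ y ∈ C, ‖F x x - F y y‖ ≤ ‖x - y‖ := by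
    intro x hx y hy
    have := hF x hx x hx y hy y hy
    linarith
  have key : ∀ u : ℕ → H, (∀ n, u n ∈ C) →
      Tendsto (fun n => F (u n) (u n) - u n) atTop (𝓝 0) →
      ∃ φ : ℕ → ℕ, StrictMono φ ∧ ∃ q ∈ C, F q q = q ∧ Tendsto (u ∘ φ) atTop (𝓝 q) := by
    intro u hu h0
    have hb : Bornology.IsBounded (Set.range u) :=
      hbdd.subset (Set.range_subset_iff.2 hu)
    obtain ⟨φ, hφ, q, _, hq, _⟩ := hdemi u u hu hu hb hb ⟨0, h0⟩ ⟨0, h0⟩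
    have hqC : q ∈ C := hcl.mem_of_tendsto hq (Eventually.of_forall fun n => hu _)
    refine ⟨φ, hφ, q, hqC, ?_, hq⟩
    have h1 : Tendsto (fun n => F (u (φ n)) (u (φ n)) - u (φ n)) atTop (𝓝 0) :=
      h0.comp hφ.tendsto_atTop
    have h2 : Tendsto (fun n => F (u (φ n)) (u (φ n))) atTop (𝓝 q) := by
      have := h1.add hq
      simpa using this
    have h3 : Tendsto (fun n => F (u (φ n)) (u (φ n))) atTop (𝓝 (F q q)) := by
      rw [tendsto_iff_norm_sub_tendsto_zero] at hq ⊢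
      exact squeeze_zero (fun n => norm_nonneg _) (fun n => hT _ (hu _) _ hqC) hq
    exact tendsto_nhds_unique h3 h2
  obtain ⟨M, hM⟩ := hbdd.exists_norm_le
  -- existence of a fixed point
  have hfix : ∃ p ∈ C, F p p = p := by
    obtain ⟨c, hc⟩ := hne
    have hex : ∀ n : ℕ, ∃ u ∈ C,
        (1 / ((n : ℝ) + 1)) • c + (1 - 1 / ((n : ℝ) + 1)) • F u u = u := by
      intro n
      set t : ℝ := 1 / ((n : ℝ) + 1) with ht
      have ht0 : 0 < t := by positivity
      have ht1 : t ≤ 1 := by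
        rw [ht, div_le_one (by positivity)]
        have : (0 : ℝ) ≤ n := Nat.cast_nonneg n
        linarith
      have hm : ∀ u ∈ C, t • c + (1 - t) • F u u ∈ C := fun u hu =>
        hconv hc (hmaps u hu u hu) ht0.le (by linarith) (by ring)
      have : CompleteSpace C := hcl.completeSpace_coe
      have : Nonempty C := ⟨⟨c, hc⟩⟩
      let g : C → C := fun u => ⟨t • c + (1 - t) • F u u, hm u u.2⟩
      have hg : ContractingWith (Real.toNNReal (1 - t)) g := by
        refine ⟨?_, ?_⟩
        · rw [Real.toNNReal_lt_one]
          linarith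
        · refine LipschitzWith.of_dist_le_mul fun a b => ?_
          rw [Real.coe_toNNReal _ (by linarith)]
          change dist (t • c + (1 - t) • F a a) (t • c + (1 - t) • F b b) ≤ (1 - t) * dist (a : H) b
          rw [dist_add_left, dist_eq_norm, dist_eq_norm, ← smul_sub, norm_smul, Real.norm_eq_abs,
            abs_of_nonneg (by linarith)]
          exact mul_le_mul_of_nonneg_left (hT _ a.2 _ b.2) (by linarith)
      refine ⟨(hg.fixedPoint g : C), (hg.fixedPoint g).2, ?_⟩
      exact congrArg Subtype.val (hg.fixedPoint_isFixedPt (f := g))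
    choose u hu hue using hex
    have h0 : Tendsto (fun n => F (u n) (u n) - u n) atTop (𝓝 0) := by
      have hlim : Tendsto (fun n : ℕ => (1 / ((n : ℝ) + 1)) * (2 * M)) atTop (𝓝 0) := by
        simpa using (tendsto_one_div_add_atTop_nhds_zero_nat (𝕜 := ℝ)).mul_const (2 * M)
      refine squeeze_zero_norm (fun n => ?_) hlim
      have e : F (u n) (u n) - u n = (1 / ((n : ℝ) + 1)) • (F (u n) (u n) - c) := by
        nth_rw 3 [← hue n]
        module
      rw [e, norm_smul, Real.norm_eq_abs, abs_of_nonneg (by positivity)]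
      refine mul_le_mul_of_nonneg_left ?_ (by positivity)
      have := norm_sub_le (F (u n) (u n)) c
      have h1 := hM _ (hmaps _ (hu n) _ (hu n))
      have h2 := hM _ hc
      linarith
    obtain ⟨_, _, q, hq, hqq, _⟩ := key u hu h0
    exact ⟨q, hq, hqq⟩
  intro l hl0 hl1 x hx0 hx
  have hxC : ∀ n, x n ∈ C := by
    intro n
    induction n with
    | zero => exact hx0
    | succ k ih =>
      rw [hx]
      exact hconv ih (hmaps _ ih _ ih) hl0.le (by linarith) (by ring)
  have hstep : ∀ p ∈ C, F p p = p → ∀ n, l * (1 - l) * ‖F (x n) (x n) - x n‖ ^ 2 ≤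
      ‖x n - p‖ ^ 2 - ‖x (n + 1) - p‖ ^ 2 := by
    intro p hp hpp n
    have h1 : ‖F (x n) (x n) - p‖ ≤ ‖x n - p‖ := by
      have := hT _ (hxC n) _ hp
      rwa [hpp] at this
    have h2 : ‖F (x n) (x n) - p‖ ^ 2 ≤ ‖x n - p‖ ^ 2 := by gcongr
    have e1 : x (n + 1) - p = l • (x n - p) + (1 - l) • (F (x n) (x n) - p) := by
      rw [hx]
      module
    have e2 : F (x n) (x n) - x n = (F (x n) (x n) - p) - (x n - p) := by abel
    rw [e1, e2]
    generalize F (x n) (x n) - p = a at *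
    generalize x n - p = b at *
    rw [norm_add_sq_real, norm_sub_sq_real, norm_smul, norm_smul, inner_smul_left,
      inner_smul_right, Real.norm_eq_abs, Real.norm_eq_abs, mul_pow, mul_pow, sq_abs, sq_abs,
      real_inner_comm]
    simp only [conj_trivial]
    nlinarith [mul_le_mul_of_nonneg_left h2 (by linarith : (0 : ℝ) ≤ 1 - l)]
  have hpos : 0 < l * (1 - l) := mul_pos hl0 (by linarith)
  have h0 : Tendsto (fun n => F (x n) (x n) - x n) atTop (𝓝 0) := by
    obtain ⟨p, hp, hpp⟩ := hfix
    have hanti : Antitone fun n => ‖x n - p‖ ^ 2 := by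
      refine antitone_nat_of_succ_le fun n => ?_
      have := hstep p hp hpp n
      have : 0 ≤ l * (1 - l) * ‖F (x n) (x n) - x n‖ ^ 2 := by positivity
      linarith
    have hlim := tendsto_atTop_ciInf hanti
      ⟨0, by rintro _ ⟨n, rfl⟩; positivity⟩
    have hd := hlim.sub (hlim.comp (tendsto_add_atTop_nat 1))
    rw [sub_self] at hd
    have h1 := squeeze_zero (fun n => by positivity) (hstep p hp hpp) hd
    have h2 : Tendsto (fun n => ‖F (x n) (x n) - x n‖ ^ 2) atTop (𝓝 0) := by
      have := h1.const_mul (l * (1 - l))⁻¹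
      simpa [← mul_assoc, inv_mul_cancel₀ hpos.ne', mul_zero] using this.congr fun n => by
        rw [inv_mul_cancel_left₀ hpos.ne']
    have h3 := h2.sqrt
    simp only [Real.sqrt_zero, Real.sqrt_sq (norm_nonneg _)] at h3
    exact tendsto_zero_iff_norm_tendsto_zero.2 h3
  obtain ⟨φ, hφ, q, hq, hqq, hlim⟩ := key x hxC h0
  refine ⟨q, hq, hqq, ?_⟩
  have hanti : Antitone fun n => ‖x n - q‖ := by
    refine antitone_nat_of_succ_le fun n => ?_
    have := hstep q hq hqq n
    have : 0 ≤ l * (1 - l) * ‖F (x n) (x n) - x n‖ ^ 2 := by positivity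
    exact (sq_le_sq₀ (norm_nonneg _) (norm_nonneg _)).1 (by linarith)
  rw [tendsto_iff_norm_sub_tendsto_zero] at hlim ⊢
  have h1 := tendsto_atTop_ciInf hanti ⟨0, by rintro _ ⟨n, rfl⟩; positivity⟩
  have h2 := tendsto_nhds_unique (h1.comp hφ.tendsto_atTop) hlim
  rwa [h2] at h1
end

section
/- Let H be a real Hilbert space, C a nonempty closed, bounded and convex subset of H, and F : C × C → C a weakly nonexpansive mapping such that p ∈ C is the unique point of C satisfying F(p,p) = p. Then for every λ ∈ (0,1) and x₀ ∈ C, the sequence defined by xₙ₊₁ = (1−λ)xₙ + λF(xₙ, xₙ) converges weakly to p; that is, for every continuous linear functional f on H, f(xₙ) → f(p) as n → ∞. -/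
open Filter Topology

/-- Weak compactness along an ultrafilter. -/
lemma exists_weak_limit {H : Type*} [NormedAddCommGroup H] [InnerProductSpace ℝ H]
    [CompleteSpace H] (U : Ultrafilter ℕ) (x : ℕ → H) (M : ℝ) (hM : ∀ n, ‖x n‖ ≤ M) :
    ∃ q : H, ∀ y : H, Tendsto (fun n => inner ℝ (x n) y) U (𝓝 (inner ℝ q y)) := by
  have hb : ∀ y : H, ∀ n, |inner ℝ (x n) y| ≤ M * ‖y‖ := fun y n =>
    (abs_real_inner_le_norm _ _).trans (by gcongr; exact hM n)
  have h1 : ∀ y : H, ∃ r : ℝ, Tendsto (fun n => inner ℝ (x n) y) U (𝓝 r) := by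
    intro y
    have hc : IsCompact (Set.Icc (-(M * ‖y‖)) (M * ‖y‖)) := isCompact_Icc
    obtain ⟨r, -, hr⟩ := hc.ultrafilter_le_nhds (U.map (fun n => inner ℝ (x n) y)) (by
      rw [le_principal_iff]
      exact Filter.mem_map.mpr (Filter.univ_mem' (fun n => abs_le.mp (hb y n))))
    exact ⟨r, hr⟩
  choose L hL using h1
  let φ : H →ₗ[ℝ] ℝ :=
    { toFun := L
      map_add' := fun y z => tendsto_nhds_unique (hL (y + z)) (by
        simpa only [inner_add_right] using (hL y).add (hL z))
      map_smul' := fun c y => tendsto_nhds_unique (hL (c • y)) (by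
        simpa only [inner_smul_right, smul_eq_mul, RingHom.id_apply] using
          (hL y).const_mul c) }
  have hφ : ∀ y, ‖φ y‖ ≤ M * ‖y‖ := fun y =>
    le_of_tendsto (hL y).abs (Filter.Eventually.of_forall (hb y))
  refine ⟨(InnerProductSpace.toDual ℝ H).symm (φ.mkContinuous M hφ), fun y => ?_⟩
  rw [InnerProductSpace.toDual_symm_apply]
  exact hL y

/-- If `F : C × C → C` is weakly nonexpansive on a nonempty closed
bounded convex subset `C` of a real Hilbert space and `p ∈ C` is the unique point of `C`
with `F(p,p) = p`, then for every `λ ∈ (0,1)` and `x₀ ∈ C`, the Krasnoselskij iteration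
`xₙ₊₁ = (1−λ)xₙ + λF(xₙ,xₙ)` converges weakly to `p`. -/
theorem krasnoselskij_weak_convergence_unique_fixed_point
    {H : Type*} [NormedAddCommGroup H] [InnerProductSpace ℝ H] [CompleteSpace H]
    (C : Set H) (hne : C.Nonempty) (hcl : IsClosed C)
    (hbdd : Bornology.IsBounded C) (hconv : Convex ℝ C)
    (F : H → H → H) (hmaps : ∀ x ∈ C, ∀ y ∈ C, F x y ∈ C)
    (a b : ℝ) (ha : 0 ≤ a) (hb : 0 ≤ b) (hab : a + b ≤ 1)
    (hF : ∀ x ∈ C, ∀ y ∈ C, ∀ u ∈ C, ∀ v ∈ C,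
      ‖F x y - F u v‖ ≤ a * ‖x - u‖ + b * ‖y - v‖)
    (p : H) (hp : p ∈ C) (hfix : F p p = p)
    (huniq : ∀ q ∈ C, F q q = q → q = p) :
    ∀ l : ℝ, 0 < l → l < 1 → ∀ x : ℕ → H, x 0 ∈ C →
      (∀ n, x (n + 1) = (1 - l) • x n + l • F (x n) (x n)) →
      ∀ f : H →L[ℝ] ℝ, Tendsto (fun n => f (x n)) atTop (𝓝 (f p)) := by
  intro l hl0 hl1 x hx0 hx f
  have hxC : ∀ n, x n ∈ C := by
    intro n
    induction n with
    | zero => exact hx0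
    | succ n ih =>
      rw [hx n]
      exact hconv ih (hmaps _ ih _ ih) (by linarith) hl0.le (by ring)
  have hT : ∀ u ∈ C, ∀ v ∈ C, ‖F u u - F v v‖ ≤ ‖u - v‖ := by
    intro u hu v hv
    have h := hF u hu u hu v hv v hv
    nlinarith [norm_nonneg (u - v)]
  have hstep : ∀ n, l * (1 - l) * ‖x n - F (x n) (x n)‖ ^ 2 ≤
      ‖x n - p‖ ^ 2 - ‖x (n + 1) - p‖ ^ 2 := by
    intro n
    have h1 := hT (x n) (hxC n) p hp
    rw [hfix] at h1
    have h2 : ‖F (x n) (x n) - p‖ ^ 2 ≤ ‖x n - p‖ ^ 2 := by gcongr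
    have e1 : x (n + 1) - p = (1 - l) • (x n - p) + l • (F (x n) (x n) - p) := by
      rw [hx n]; module
    have e2 : x n - F (x n) (x n) = (x n - p) - (F (x n) (x n) - p) := by abel
    rw [e1, e2, norm_add_sq_real, norm_sub_sq_real, norm_smul, norm_smul,
      inner_smul_left, inner_smul_right, mul_pow, mul_pow, Real.norm_eq_abs, Real.norm_eq_abs,
      sq_abs, sq_abs]
    simp only [conj_trivial]
    nlinarith
  have hanti : Antitone (fun n => ‖x n - p‖ ^ 2) := antitone_nat_of_succ_le (fun n => by
    have := hstep n
    have h3 : 0 ≤ l * (1 - l) * ‖x n - F (x n) (x n)‖ ^ 2 :=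
      mul_nonneg (mul_nonneg hl0.le (by linarith)) (sq_nonneg _)
    linarith)
  have hlim := tendsto_atTop_ciInf hanti ⟨0, by rintro _ ⟨n, rfl⟩; positivity⟩
  have hdiff := hlim.sub (hlim.comp (tendsto_add_atTop_nat 1))
  rw [sub_self] at hdiff
  have hpos : 0 < l * (1 - l) := mul_pos hl0 (by linarith)
  have he2 : Tendsto (fun n => l * (1 - l) * ‖x n - F (x n) (x n)‖ ^ 2) atTop (𝓝 0) :=
    squeeze_zero (fun n => by positivity) hstep hdiff
  have he : Tendsto (fun n => ‖x n - F (x n) (x n)‖) atTop (𝓝 0) := by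
    have h4 := (he2.const_mul (l * (1 - l))⁻¹).sqrt
    simpa [← mul_assoc, inv_mul_cancel₀ hpos.ne', Real.sqrt_sq, -mul_inv_rev] using h4
  obtain ⟨M, hM⟩ := hbdd.exists_norm_le
  rw [tendsto_iff_ultrafilter]
  intro U hU
  obtain ⟨q, hq⟩ := exists_weak_limit U x M (fun n => hM _ (hxC n))
  have hqC : q ∈ C := by
    obtain ⟨v, hv, hmin⟩ := exists_norm_eq_iInf_of_complete_convex hne hcl.isComplete hconv q
    rw [norm_eq_iInf_iff_real_inner_le_zero hconv hv] at hmin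
    have h5 : inner ℝ q (q - v) - inner ℝ v (q - v) ≤ 0 := by
      refine le_of_tendsto ((hq (q - v)).sub_const _) (Filter.Eventually.of_forall fun n => ?_)
      have := hmin (x n) (hxC n)
      rwa [← inner_sub_left, real_inner_comm]
    rw [← inner_sub_left, real_inner_self_eq_norm_sq] at h5
    have h6 : ‖q - v‖ = 0 := by nlinarith [norm_nonneg (q - v)]
    rw [norm_eq_zero, sub_eq_zero] at h6
    rwa [h6]
  have hqfix : F q q = q := by
    have heU := he.mono_left hU
    have hr : Tendsto (fun n => ‖x n - F (x n) (x n)‖ ^ 2 +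
        2 * ‖x n - F (x n) (x n)‖ * (M + M) -
        2 * (inner ℝ (x n) (q - F q q) - inner ℝ q (q - F q q))) U (𝓝 0) := by
      have := ((heU.pow 2).add ((heU.const_mul 2).mul_const (M + M))).sub
        (((hq (q - F q q)).sub_const (inner ℝ q (q - F q q))).const_mul 2)
      simpa using this
    have h7 : ‖q - F q q‖ ^ 2 ≤ 0 := by
      refine ge_of_tendsto hr (Filter.Eventually.of_forall fun n => ?_)
      have k1 : ‖x n - F q q‖ ≤ ‖x n - F (x n) (x n)‖ + ‖x n - q‖ := by
        have := norm_add_le (x n - F (x n) (x n)) (F (x n) (x n) - F q q)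
        rw [sub_add_sub_cancel] at this
        linarith [hT (x n) (hxC n) q hqC]
      have k2 : ‖x n - q‖ ≤ M + M :=
        (norm_sub_le _ _).trans (add_le_add (hM _ (hxC n)) (hM _ hqC))
      have k3 : ‖x n - F q q‖ ^ 2 ≤ (‖x n - F (x n) (x n)‖ + ‖x n - q‖) ^ 2 := by gcongr
      have k4 := norm_add_sq_real (x n - q) (q - F q q)
      rw [sub_add_sub_cancel, inner_sub_left] at k4
      have k5 := mul_le_mul_of_nonneg_left k2 (norm_nonneg (x n - F (x n) (x n)))
      nlinarith
    have h8 : ‖q - F q q‖ = 0 := by nlinarith [norm_nonneg (q - F q q)]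
    rw [norm_eq_zero, sub_eq_zero] at h8
    exact h8.symm
  have hqp := huniq q hqC hqfix
  subst hqp
  have h9 := hq ((InnerProductSpace.toDual ℝ H).symm f)
  have h10 : ∀ z : H, inner ℝ z ((InnerProductSpace.toDual ℝ H).symm f) = f z := fun z => by
    rw [real_inner_comm, InnerProductSpace.toDual_symm_apply]
  simpa only [h10] using h9
end

section
/- Let H be a real Hilbert space, C a nonempty closed, bounded and convex subset of H, and F : C × C → C a weakly nonexpansive operator. Then for every λ ∈ (0,1) and x₀ ∈ C, the sequence defined by xₙ₊₁ = (1−λ)xₙ + λF(xₙ, xₙ) converges weakly to some p ∈ C with F(p,p) = p; that is, for every continuous linear functional f on H, f(xₙ) → f(p) as n → ∞. -/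
open Filter Topology

theorem kwc_weaklim {H : Type*} [NormedAddCommGroup H] [InnerProductSpace ℝ H] [CompleteSpace H]
    (C : Set H) (hcl : IsClosed C) (hbdd : Bornology.IsBounded C) (hconv : Convex ℝ C)
    (U : Ultrafilter ℕ) (y : ℕ → H) (hy : ∀ n, y n ∈ C) :
    ∃ p ∈ C, ∀ f : H →L[ℝ] ℝ, Tendsto (fun n => f (y n)) U (𝓝 (f p)) := by
  obtain ⟨R, hR⟩ := hbdd.subset_closedBall (0 : H)
  have hc := WeakDual.isCompact_closedBall (𝕜 := ℝ) (E := H) 0 R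
  rw [isCompact_iff_ultrafilter_le_nhds] at hc
  obtain ⟨g, hg, hlim⟩ := hc
    (U.map (fun n => StrongDual.toWeakDual (InnerProductSpace.toDual ℝ H (y n)))) (by
      rw [le_principal_iff]
      refine Filter.mem_map.2 (Filter.univ_mem' fun n => ?_)
      have := hR (hy n)
      simpa using this)
  have key : ∀ f : H →L[ℝ] ℝ, Tendsto (fun n => f (y n)) U
      (𝓝 (f ((InnerProductSpace.toDual ℝ H).symm (WeakDual.toStrongDual g)))) := by
    intro f
    obtain ⟨z, rfl⟩ := (InnerProductSpace.toDual ℝ H).surjective f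
    have h1 : Tendsto (fun n => StrongDual.toWeakDual (InnerProductSpace.toDual ℝ H (y n)))
      (U : Filter ℕ) (𝓝 g) := hlim
    have h2 := ((WeakDual.eval_continuous z).tendsto g).comp h1
    simp only [InnerProductSpace.toDual_apply_apply]
    rw [real_inner_comm, InnerProductSpace.toDual_symm_apply]
    refine h2.congr fun n => ?_
    change inner ℝ (y n) z = _
    rw [real_inner_comm]
  refine ⟨_, ?_, key⟩
  by_contra hp
  obtain ⟨f, u, h1, h2⟩ := geometric_hahn_banach_point_closed hconv hcl hp
  have := ge_of_tendsto (key f) (Filter.Eventually.of_forall fun n => (h2 _ (hy n)).le)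
  linarith

theorem kwc_demi {H : Type*} [NormedAddCommGroup H] [InnerProductSpace ℝ H] [CompleteSpace H]
    (C : Set H) (hcl : IsClosed C) (hbdd : Bornology.IsBounded C) (hconv : Convex ℝ C)
    (T : H → H) (hT : ∀ x ∈ C, ∀ y ∈ C, ‖T x - T y‖ ≤ ‖x - y‖)
    (U : Ultrafilter ℕ) (y : ℕ → H) (hy : ∀ n, y n ∈ C)
    (hlim : Tendsto (fun n => ‖y n - T (y n)‖) U (𝓝 0)) :
    ∃ p ∈ C, T p = p ∧ ∀ f : H →L[ℝ] ℝ, Tendsto (fun n => f (y n)) U (𝓝 (f p)) := by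
  obtain ⟨p, hp, key⟩ := kwc_weaklim C hcl hbdd hconv U y hy
  refine ⟨p, hp, ?_, key⟩
  obtain ⟨R, hR⟩ := hbdd.subset_closedBall p
  have hR' : ∀ n, ‖y n - p‖ ≤ R := fun n => by simpa [dist_eq_norm] using hR (hy n)
  have hk := key (InnerProductSpace.toDual ℝ H (p - T p))
  simp only [InnerProductSpace.toDual_apply_apply] at hk
  have hle : ∀ n, ‖p - T p‖ ^ 2 ≤ ‖y n - T (y n)‖ ^ 2 + 2 * ‖y n - T (y n)‖ * R
      - 2 * (inner ℝ (p - T p) (y n) - inner ℝ (p - T p) p) := by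
    intro n
    have h1 : ‖y n - T p‖ ≤ ‖y n - T (y n)‖ + ‖y n - p‖ := by
      calc ‖y n - T p‖ = ‖(y n - T (y n)) + (T (y n) - T p)‖ := by congr 1; abel
        _ ≤ _ := (norm_add_le _ _).trans (by gcongr; exact hT _ (hy n) _ hp)
    have h2 : ‖y n - T p‖ ^ 2 = ‖y n - p‖ ^ 2 + 2 * inner ℝ (y n - p) (p - T p)
        + ‖p - T p‖ ^ 2 := by
      rw [← norm_add_sq_real]; congr 2; abel
    rw [real_inner_comm, inner_sub_right] at h2
    have h3 := pow_le_pow_left₀ (norm_nonneg _) h1 2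
    have h4 := mul_le_mul_of_nonneg_left (hR' n) (norm_nonneg (y n - T (y n)))
    nlinarith
  have hl : Tendsto (fun n => ‖y n - T (y n)‖ ^ 2 + 2 * ‖y n - T (y n)‖ * R
      - 2 * (inner ℝ (p - T p) (y n) - inner ℝ (p - T p) p)) U
      (𝓝 (0 ^ 2 + 2 * 0 * R - 2 * (inner ℝ (p - T p) p - inner ℝ (p - T p) p))) :=
    ((hlim.pow 2).add ((hlim.const_mul 2).mul_const R)).sub
      ((hk.sub_const _).const_mul 2)
  have h0 := ge_of_tendsto hl (Filter.Eventually.of_forall hle)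
  have h5 : ‖p - T p‖ = 0 := by
    have : ‖p - T p‖ ^ 2 ≤ 0 := by simpa using h0
    nlinarith [norm_nonneg (p - T p)]
  exact (sub_eq_zero.1 (norm_eq_zero.1 h5)).symm

theorem kwc_fix {H : Type*} [NormedAddCommGroup H] [InnerProductSpace ℝ H] [CompleteSpace H]
    (C : Set H) (hcl : IsClosed C) (hbdd : Bornology.IsBounded C) (hconv : Convex ℝ C)
    (T : H → H) (hm : ∀ x ∈ C, T x ∈ C) (hT : ∀ x ∈ C, ∀ y ∈ C, ‖T x - T y‖ ≤ ‖x - y‖)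
    (c : H) (hc : c ∈ C) : ∃ p ∈ C, T p = p := by
  obtain ⟨R, hR⟩ := hbdd.subset_closedBall c
  have hex : ∀ n : ℕ, ∃ y ∈ C, ‖y - T y‖ ≤ (1 / ((n : ℝ) + 1)) * R := by
    intro n
    set s : ℝ := 1 / ((n : ℝ) + 1) with hs
    have hs0 : 0 < s := by positivity
    have hs1 : s ≤ 1 := by
      rw [hs, div_le_one (by positivity)]; linarith [(Nat.cast_nonneg n : (0 : ℝ) ≤ n)]
    have hmap : Set.MapsTo (fun x => s • c + (1 - s) • T x) C C := fun x hx =>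
      hconv hc (hm x hx) hs0.le (by linarith) (by ring)
    have hcon : ContractingWith (1 - s).toNNReal (hmap.restrict _ C C) := by
      refine ⟨by rw [Real.toNNReal_lt_one]; linarith, LipschitzWith.of_dist_le_mul ?_⟩
      rintro ⟨x, hx⟩ ⟨y, hy⟩
      rw [Real.coe_toNNReal _ (by linarith), Subtype.dist_eq, Subtype.dist_eq]
      simp only [Set.MapsTo.val_restrict_apply, dist_eq_norm]
      rw [add_sub_add_left_eq_sub, ← smul_sub, norm_smul, Real.norm_of_nonneg (by linarith)]
      exact mul_le_mul_of_nonneg_left (hT x hx y hy) (by linarith)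
    obtain ⟨y, hy, hfix, -⟩ := hcon.exists_fixedPoint' hcl.isComplete hmap hc (edist_ne_top _ _)
    refine ⟨y, hy, ?_⟩
    have e : s • c + (1 - s) • T y = y := hfix
    have : y - T y = s • (c - T y) := by
      nth_rewrite 1 [← e]; module
    rw [this, norm_smul, Real.norm_of_nonneg hs0.le]
    have := hR (hm y hy)
    rw [Metric.mem_closedBall, dist_comm, dist_eq_norm] at this
    gcongr
  choose y hy hyl using hex
  have hl : Tendsto (fun n => ‖y n - T (y n)‖) atTop (𝓝 0) := by
    refine squeeze_zero (fun n => norm_nonneg _) hyl ?_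
    simpa using (tendsto_one_div_add_atTop_nhds_zero_nat (𝕜 := ℝ)).mul_const R
  obtain ⟨p, hp, h, -⟩ := kwc_demi C hcl hbdd hconv T hT (Ultrafilter.of atTop) y hy
    (hl.mono_left (Ultrafilter.of_le _))
  exact ⟨p, hp, h⟩

/-- If `F : C × C → C` is weakly nonexpansive on a nonempty closed
bounded convex subset `C` of a real Hilbert space, then for every `λ ∈ (0,1)` and
`x₀ ∈ C`, the Krasnoselskij iteration `xₙ₊₁ = (1−λ)xₙ + λF(xₙ,xₙ)` converges weakly to
some `p ∈ C` with `F(p,p) = p`. -/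
theorem krasnoselskij_weak_convergence
    {H : Type*} [NormedAddCommGroup H] [InnerProductSpace ℝ H] [CompleteSpace H]
    (C : Set H) (hne : C.Nonempty) (hcl : IsClosed C)
    (hbdd : Bornology.IsBounded C) (hconv : Convex ℝ C)
    (F : H → H → H) (hmaps : ∀ x ∈ C, ∀ y ∈ C, F x y ∈ C)
    (a b : ℝ) (ha : 0 ≤ a) (hb : 0 ≤ b) (hab : a + b ≤ 1)
    (hF : ∀ x ∈ C, ∀ y ∈ C, ∀ u ∈ C, ∀ v ∈ C,
      ‖F x y - F u v‖ ≤ a * ‖x - u‖ + b * ‖y - v‖) :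
    ∀ l : ℝ, 0 < l → l < 1 → ∀ x : ℕ → H, x 0 ∈ C →
      (∀ n, x (n + 1) = (1 - l) • x n + l • F (x n) (x n)) →
      ∃ p ∈ C, F p p = p ∧
        ∀ f : H →L[ℝ] ℝ, Tendsto (fun n => f (x n)) atTop (𝓝 (f p)) := by
  intro l hl0 hl1 x hx0 hrec
  set T : H → H := fun z => F z z with hTdef
  have hm : ∀ z ∈ C, T z ∈ C := fun z hz => hmaps z hz z hz
  have hT : ∀ z ∈ C, ∀ w ∈ C, ‖T z - T w‖ ≤ ‖z - w‖ := by
    intro z hz w hw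
    have := hF z hz z hz w hw w hw
    have h2 := mul_le_mul_of_nonneg_right hab (norm_nonneg (z - w))
    simp only [hTdef]
    linarith
  have hrec' : ∀ n, x (n + 1) = (1 - l) • x n + l • T (x n) := hrec
  have hx : ∀ n, x n ∈ C := by
    intro n
    induction n with
    | zero => exact hx0
    | succ k ih =>
      rw [hrec']
      exact hconv ih (hm _ ih) (by linarith) hl0.le (by ring)
  have hstep : ∀ q ∈ C, T q = q → ∀ n, ‖x (n + 1) - q‖ ^ 2 ≤
      ‖x n - q‖ ^ 2 - l * (1 - l) * ‖x n - T (x n)‖ ^ 2 := by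
    intro q hq hTq n
    have e1 : x (n + 1) - q = (1 - l) • (x n - q) + l • (T (x n) - q) := by
      rw [hrec']; module
    have e2 : x n - T (x n) = (x n - q) - (T (x n) - q) := by abel
    have h := hT _ (hx n) q hq
    rw [hTq] at h
    have h3 := pow_le_pow_left₀ (norm_nonneg _) h 2
    rw [e1, e2, norm_add_sq_real, norm_sub_sq_real (x n - q), inner_smul_left, inner_smul_right,
      norm_smul, norm_smul, Real.norm_of_nonneg hl0.le, Real.norm_of_nonneg (by linarith)]
    simp only [conj_trivial]
    nlinarith [mul_le_mul_of_nonneg_left h3 hl0.le]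
  have hconvg : ∀ q ∈ C, T q = q → ∃ L, Tendsto (fun n => ‖x n - q‖ ^ 2) atTop (𝓝 L) := by
    intro q hq hTq
    have hanti : Antitone (fun n => ‖x n - q‖ ^ 2) := antitone_nat_of_succ_le fun n => by
      have := hstep q hq hTq n
      have h2 : 0 ≤ l * (1 - l) * ‖x n - T (x n)‖ ^ 2 :=
        mul_nonneg (mul_nonneg hl0.le (by linarith)) (sq_nonneg _)
      linarith
    exact ⟨_, tendsto_atTop_ciInf hanti ⟨0, by rintro _ ⟨n, rfl⟩; positivity⟩⟩
  obtain ⟨c, hc⟩ := hne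
  obtain ⟨q, hq, hTq⟩ := kwc_fix C hcl hbdd hconv T hm hT c hc
  have hreg : Tendsto (fun n => ‖x n - T (x n)‖) atTop (𝓝 0) := by
    obtain ⟨L, hL⟩ := hconvg q hq hTq
    have hlp : 0 < l * (1 - l) := mul_pos hl0 (by linarith)
    have h1 : Tendsto (fun n => (‖x n - q‖ ^ 2 - ‖x (n + 1) - q‖ ^ 2) / (l * (1 - l)))
        atTop (𝓝 0) := by
      simpa using (hL.sub (hL.comp (tendsto_add_atTop_nat 1))).div_const (l * (1 - l))
    have h2 : Tendsto (fun n => ‖x n - T (x n)‖ ^ 2) atTop (𝓝 0) := by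
      refine squeeze_zero (fun n => sq_nonneg _) (fun n => ?_) h1
      rw [le_div_iff₀ hlp]
      linarith [hstep q hq hTq n]
    simpa using h2.sqrt
  have hdemi := fun (U : Ultrafilter ℕ) (hU : (U : Filter ℕ) ≤ atTop) =>
    kwc_demi C hcl hbdd hconv T hT U x hx (hreg.mono_left hU)
  obtain ⟨p, hp, hTp, hpl⟩ := hdemi (Ultrafilter.of atTop) (Ultrafilter.of_le _)
  refine ⟨p, hp, hTp, fun f => ?_⟩
  rw [tendsto_iff_ultrafilter]
  intro U hU
  obtain ⟨r, hr, hTr, hrl⟩ := hdemi U hU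
  have hpr : p = r := by
    obtain ⟨L, hL⟩ := hconvg p hp hTp
    obtain ⟨M, hM⟩ := hconvg r hr hTr
    have e : ∀ n, inner ℝ (p - r) (x n) =
        (‖p‖ ^ 2 - ‖r‖ ^ 2 - (‖x n - p‖ ^ 2 - ‖x n - r‖ ^ 2)) / 2 := by
      intro n
      rw [norm_sub_sq_real, norm_sub_sq_real, inner_sub_left, real_inner_comm p,
        real_inner_comm r]
      ring
    have ht : Tendsto (fun n => inner ℝ (p - r) (x n)) atTop
        (𝓝 ((‖p‖ ^ 2 - ‖r‖ ^ 2 - (L - M)) / 2)) := by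
      simp only [e]
      exact ((hL.sub hM).const_sub _).div_const 2
    have k1 := hpl (InnerProductSpace.toDual ℝ H (p - r))
    have k2 := hrl (InnerProductSpace.toDual ℝ H (p - r))
    simp only [InnerProductSpace.toDual_apply_apply] at k1 k2
    have u1 := tendsto_nhds_unique k1 (ht.mono_left (Ultrafilter.of_le _))
    have u2 := tendsto_nhds_unique k2 (ht.mono_left hU)
    have : inner ℝ (p - r) (p - r) = 0 := by rw [inner_sub_right, u1, u2, sub_self]
    exact sub_eq_zero.1 (inner_self_eq_zero.1 this)
  rw [hpr]
  exact hrl f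
end
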